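/- Consider the two-player game G with action sets A₁ = A₂ = {L, R} and utilities (u₁,u₂) given by (L,L) = (4,3), (L,R) = (1,4), (R,L) = (2,1), (R,R) = (3,2). With initial reference point a₀ = (L,R), k = 1, and the strictly alternating player function in which player 1 (Row) moves first, the (unconstrained) subgame perfect equilibrium outcome of Γ(a₀,k,I) is (R,R), which is Pareto dominated by (L,L). Hence without the no-harm principle constraint, the equilibrium outcome of Γ need not be Pareto optimal. -/

import Mathlib

namespace NoHarm

/-- A finite normal form game with `n` players: finite action sets `A i`,
nonempty, with decidable equality, and utility functions `u i : Profile → ℝ`. -/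
structure Game (n : ℕ) where
  A : Fin n → Type
  fintypeA : ∀ i, Fintype (A i)
  decA : ∀ i, DecidableEq (A i)
  neA : ∀ i, Nonempty (A i)
  u : Fin n → (∀ i, A i) → ℝ

attribute [instance] Game.fintypeA Game.decA Game.neA

/-- Action profiles of `G`. -/
abbrev Profile {n : ℕ} (G : Game n) : Type := ∀ i, G.A i

/-- A recorded move in the extensive form game `Γ`: the acting player together
with their choice (`none` = pass, `some a` = choose action `a`; choosing the
current component of the state is "staying", any other action is "moving"). -/
abbrev Move {n : ℕ} (G : Game n) : Type := Σ i : Fin n, Option (G.A i)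

/-- A node of `Γ`, identified with the history of moves leading to it
(the root is `[]`). -/
abbrev Hist {n : ℕ} (G : Game n) : Type := List (Move G)

variable {n : ℕ}

/-- One step of the left fold computing, along a history, the triple
(current state, current reference point, player who established the current
reference point by staying -- `none` for the initial reference point). -/
def stepFold (G : Game n) (x : Profile G × Profile G × Option (Fin n)) (m : Move G) :
    Profile G × Profile G × Option (Fin n) :=
  match m with
  | ⟨_, none⟩ => x
  | ⟨i, some a⟩ =>
    if a = x.1 i then (x.1, x.1, some i)
    else (Function.update x.1 i a, x.2.1, x.2.2)

/-- The (state, reference point, proposer) data at the node `h` of `Γ(a0,·,·)`. -/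
def fold3 (G : Game n) (a0 : Profile G) (h : Hist G) :
    Profile G × Profile G × Option (Fin n) :=
  h.foldl (stepFold G) (a0, a0, none)

/-- The state `S(x)` at a node. -/
def state (G : Game n) (a0 : Profile G) (h : Hist G) : Profile G := (fold3 G a0 h).1

/-- The reference point at a node (the most recent state at which a player
stayed, initially `a0`). -/
def refpt (G : Game n) (a0 : Profile G) (h : Hist G) : Profile G := (fold3 G a0 h).2.1

/-- The player who established the current reference point by staying
(`none` if it is still the initial reference point `a0`). -/
def proposer (G : Game n) (a0 : Profile G) (h : Hist G) : Option (Fin n) :=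
  (fold3 G a0 h).2.2

/-- `m` is a stay action at the node `h`: the mover chooses exactly the
component of the current state belonging to them. -/
def IsStay (G : Game n) (a0 : Profile G) (h : Hist G) (m : Move G) : Prop :=
  m.2 = some (state G a0 h m.1)

/-- Termination condition (i): one player stayed at a state `b`, making it
the reference point, and a different player subsequently also stays at `b`. -/
def TerminalStay (G : Game n) (a0 : Profile G) (h : Hist G) : Prop :=
  ∃ (h' : Hist G) (m : Move G) (i : Fin n),
    h = h' ++ [m] ∧ IsStay G a0 h' m ∧ refpt G a0 h' = state G a0 h' ∧
    proposer G a0 h' = some i ∧ i ≠ m.1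

/-- Termination condition (ii): all `n` players consecutively pass
(the last `n` moves are passes and every player is among their movers). -/
def TerminalPass (G : Game n) (h : Hist G) : Prop :=
  n ≤ h.length ∧ (∀ m ∈ h.drop (h.length - n), m.2 = none) ∧
    (∀ i : Fin n, ∃ m ∈ h.drop (h.length - n), m.1 = i)

/-- Terminal nodes of `Γ(a0,·,·)`. -/
def Terminal (G : Game n) (a0 : Profile G) (h : Hist G) : Prop :=
  TerminalStay G a0 h ∨ TerminalPass G h

/-- Number of predecessor nodes of `h` having the same state as `h` at which
the move `m` was made. -/
def countAct (G : Game n) (a0 : Profile G) (h : Hist G) (m : Move G) : ℕ :=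
  ((Finset.range h.length).filter
    (fun t => h[t]? = some m ∧ state G a0 (h.take t) = state G a0 h)).card

/-- Availability of the choice `c` for player `i` at node `h`: pass is always
available, and an action `a` is available iff `i` has chosen `a` at fewer than
`k` predecessor nodes carrying the same state as `h`. -/
def availAct (G : Game n) (a0 : Profile G) (k : ℕ) (h : Hist G) {i : Fin n}
    (c : Option (G.A i)) : Prop :=
  ∀ a : G.A i, c = some a → countAct G a0 h ⟨i, some a⟩ < k

/-- `h` is a (valid) node of the game tree of `Γ(a0,k,I)`: at each step the
recorded mover is the active player given by the player function `I`, the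
chosen action was available, and no proper predecessor is terminal. -/
structure IsNode (G : Game n) (a0 : Profile G) (k : ℕ) (I : Hist G → Fin n)
    (h : Hist G) : Prop where
  mover : ∀ (t : ℕ) (ht : t < h.length), (h.get ⟨t, ht⟩).1 = I (h.take t)
  avail : ∀ (t : ℕ) (ht : t < h.length), availAct G a0 k (h.take t) (h.get ⟨t, ht⟩).2
  nonterm : ∀ t < h.length, ¬ Terminal G a0 (h.take t)

/-- The player function is admissible: along every path of play the numbers of
nodes at which any two players have been active differ by at most one. -/
def Admissible (G : Game n) (a0 : Profile G) (k : ℕ) (I : Hist G → Fin n) : Prop :=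
  ∀ h, IsNode G a0 k I h → ∀ i j : Fin n,
    (h.map Sigma.fst).count i ≤ (h.map Sigma.fst).count j + 1

/-- A pure strategy of player `i`: a choice (pass or an action) at every node. -/
abbrev Strategy (G : Game n) (i : Fin n) : Type := Hist G → Option (G.A i)

/-- A pure strategy profile. -/
abbrev StratProfile (G : Game n) : Type := ∀ i, Strategy G i

/-- A strategy profile is valid if at every non-terminal node of the tree the
active player's prescribed choice is available. -/
def ValidProfile (G : Game n) (a0 : Profile G) (k : ℕ) (I : Hist G → Fin n)
    (σ : StratProfile G) : Prop :=
  ∀ h, IsNode G a0 k I h → ¬ Terminal G a0 h → availAct G a0 k h (σ (I h) h)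

open Classical in
/-- Play according to `σ` for (at most) the given number of steps from a node,
stopping at terminal nodes. -/
noncomputable def playN (G : Game n) (a0 : Profile G) (I : Hist G → Fin n)
    (σ : StratProfile G) : ℕ → Hist G → Hist G
  | 0, h => h
  | (t + 1), h =>
    if Terminal G a0 h then h
    else playN G a0 I σ t (h ++ [⟨I h, σ (I h) h⟩])

/-- A (generous) upper bound for the length of any play of `Γ(a0,k,I)`. -/
def bound (G : Game n) (k : ℕ) : ℕ :=
  ((k + 2) * (Fintype.card (Profile G) + 2) * ((∑ i, Fintype.card (G.A i)) + 2) + 2)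
    * (n + 2) * 4

/-- The outcome of `σ` in the subgame rooted at `h`: the reference point at the
terminal node reached by playing `σ` from `h`. -/
noncomputable def outcomeFrom (G : Game n) (a0 : Profile G) (k : ℕ)
    (I : Hist G → Fin n) (σ : StratProfile G) (h : Hist G) : Profile G :=
  refpt G a0 (playN G a0 I σ (bound G k + 1) h)

/-- The outcome of the strategy profile `σ` in `Γ(a0,k,I)`. -/
noncomputable def outcome (G : Game n) (a0 : Profile G) (k : ℕ)
    (I : Hist G → Fin n) (σ : StratProfile G) : Profile G :=
  outcomeFrom G a0 k I σ []

/-- `σ` satisfies the no-harm principle: every stay action it prescribes, at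
every (on- or off-path) non-terminal node of the tree, does not harm any other
player relative to the reference point at that node. -/
def SatNHP (G : Game n) (a0 : Profile G) (k : ℕ) (I : Hist G → Fin n)
    (σ : StratProfile G) : Prop :=
  ∀ h, IsNode G a0 k I h → ¬ Terminal G a0 h →
    σ (I h) h = some (state G a0 h (I h)) →
    ∀ j, j ≠ I h → G.u j (refpt G a0 h) ≤ G.u j (state G a0 h)

/-- No-harm equilibrium of `Γ(a0,k,I)`: a valid strategy profile satisfying the
NHP such that at every non-terminal node the active player's choice is a best
response among deviations keeping the profile valid and NHP-compliant. -/
def NHE (G : Game n) (a0 : Profile G) (k : ℕ) (I : Hist G → Fin n)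
    (σ : StratProfile G) : Prop :=
  ValidProfile G a0 k I σ ∧ SatNHP G a0 k I σ ∧
  ∀ h, IsNode G a0 k I h → ¬ Terminal G a0 h →
    ∀ τ : Strategy G (I h),
      ValidProfile G a0 k I (Function.update σ (I h) τ) →
      SatNHP G a0 k I (Function.update σ (I h) τ) →
      G.u (I h) (outcomeFrom G a0 k I (Function.update σ (I h) τ) h) ≤
        G.u (I h) (outcomeFrom G a0 k I σ h)

/-- Subgame perfect equilibrium of `Γ(a0,k,I)` (no NHP constraint). -/
def SPE (G : Game n) (a0 : Profile G) (k : ℕ) (I : Hist G → Fin n)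
    (σ : StratProfile G) : Prop :=
  ValidProfile G a0 k I σ ∧
  ∀ h, IsNode G a0 k I h → ¬ Terminal G a0 h →
    ∀ τ : Strategy G (I h),
      ValidProfile G a0 k I (Function.update σ (I h) τ) →
      G.u (I h) (outcomeFrom G a0 k I (Function.update σ (I h) τ) h) ≤
        G.u (I h) (outcomeFrom G a0 k I σ h)

/-- `b` Pareto dominates `a`. -/
def ParetoDom (G : Game n) (b a : Profile G) : Prop :=
  (∀ i, G.u i a ≤ G.u i b) ∧ ∃ i, G.u i a < G.u i b

/-- `a` is Pareto optimal. -/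
def ParetoOpt (G : Game n) (a : Profile G) : Prop := ∀ b, ¬ ParetoDom G b a

/-- `b` strictly Pareto dominates `a`. -/
def StrictDom (G : Game n) (b a : Profile G) : Prop := ∀ i, G.u i a < G.u i b

/-- `a` is weakly Pareto optimal. -/
def WeakParetoOpt (G : Game n) (a : Profile G) : Prop := ∀ b, ¬ StrictDom G b a

/-- Preferences are strict: each utility function is injective on profiles. -/
def StrictPrefs (G : Game n) : Prop := ∀ i, Function.Injective (G.u i)


/-- The game of Section 4.1.1: actions `0 = L`, `1 = R`, payoffs
`(L,L)=(4,3), (L,R)=(1,4), (R,L)=(2,1), (R,R)=(3,2)`. -/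
def g13 : Game 2 where
  A _ := Fin 2
  fintypeA _ := inferInstance
  decA _ := inferInstance
  neA _ := inferInstance
  u i s :=
    if s 0 = 0 then
      (if s 1 = 0 then (if i = 0 then 4 else 3) else (if i = 0 then 1 else 4))
    else
      (if s 1 = 0 then (if i = 0 then 2 else 1) else (if i = 0 then 3 else 2))

/-- The strictly alternating player function with player `0` (Row) first. -/
def altI13 : Hist g13 → Fin 2 := fun h => ⟨h.length % 2, by omega⟩

/-- (L,R), the initial reference point. -/
def lr13 : Profile g13 := fun i => if i = 0 then (0 : Fin 2) else (1 : Fin 2)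

/-- (R,R). -/
def rr13 : Profile g13 := fun _ => (1 : Fin 2)

/-- (L,L). -/
def ll13 : Profile g13 := fun _ => (0 : Fin 2)

section General
variable {n : ℕ} {G : Game n} {a0 : Profile G} {k : ℕ} {I : Hist G → Fin n}

theorem isNode_nil : IsNode G a0 k I [] :=
  ⟨fun t ht => absurd ht (by simp), fun t ht => absurd ht (by simp),
    fun t ht => absurd ht (by simp)⟩

theorem isNode_snoc {h : Hist G} {m : Move G} :
    IsNode G a0 k I (h ++ [m]) ↔
      IsNode G a0 k I h ∧ ¬ Terminal G a0 h ∧ m.1 = I h ∧ availAct G a0 k h m.2 := by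
  constructor
  · intro H
    refine ⟨⟨?_, ?_, ?_⟩, ?_, ?_, ?_⟩
    · intro t ht
      have := H.mover t (by simp; omega)
      simpa [List.getElem_append_left ht, List.take_append_of_le_length ht.le] using this
    · intro t ht
      have := H.avail t (by simp; omega)
      rw [List.take_append_of_le_length ht.le] at this
      have e : (h ++ [m]).get ⟨t, by simp; omega⟩ = h.get ⟨t, ht⟩ := by
        simp [List.getElem_append_left ht]
      rw [e] at this
      exact this
    · intro t ht
      have := H.nonterm t (by simp; omega)
      rwa [List.take_append_of_le_length ht.le] at this
    · have := H.nonterm h.length (by simp)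
      simpa using this
    · have := H.mover h.length (by simp)
      simpa using this
    · have := H.avail h.length (by simp)
      rw [List.take_append_of_le_length le_rfl, List.take_length] at this
      have e : (h ++ [m]).get ⟨h.length, by simp⟩ = m := by simp
      rw [e] at this
      exact this
  · rintro ⟨H, hT, hm, ha⟩
    refine ⟨?_, ?_, ?_⟩
    · intro t ht
      rcases Nat.lt_or_ge t h.length with h1 | h1
      · have := H.mover t h1
        simpa [List.getElem_append_left h1, List.take_append_of_le_length h1.le] using this
      · obtain rfl : t = h.length := by simp at ht; omega
        simpa using hm
    · intro t ht
      rcases Nat.lt_or_ge t h.length with h1 | h1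
      · have := H.avail t h1
        rw [List.take_append_of_le_length h1.le]
        have e : (h ++ [m]).get ⟨t, ht⟩ = h.get ⟨t, h1⟩ := by
          simp [List.getElem_append_left h1]
        rw [e]
        exact this
      · obtain rfl : t = h.length := by simp at ht; omega
        rw [List.take_append_of_le_length le_rfl, List.take_length]
        have e : (h ++ [m]).get ⟨h.length, ht⟩ = m := by simp
        rw [e]
        exact ha
    · intro t ht
      rcases Nat.lt_or_ge t h.length with h1 | h1
      · rw [List.take_append_of_le_length h1.le]
        exact H.nonterm t h1
      · obtain rfl : t = h.length := by simp at ht; omega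
        rw [List.take_append_of_le_length le_rfl, List.take_length]
        exact hT

theorem playN_stable {B : ℕ} (hB : ∀ h, IsNode G a0 k I h → h.length ≤ B)
    {σ : StratProfile G} (hσ : ValidProfile G a0 k I σ) :
    ∀ (t : ℕ) (h : Hist G), IsNode G a0 k I h → B < h.length + t →
      playN G a0 I σ (t + 1) h = playN G a0 I σ t h := by
  intro t
  induction t with
  | zero => intro h hn hl; have := hB h hn; omega
  | succ t ih =>
    intro h hn hl
    rw [playN]
    conv_rhs => rw [playN]
    split_ifs with hT
    · rfl
    · exact ih _ (isNode_snoc.2 ⟨hn, hT, rfl, hσ h hn hT⟩) (by simp; omega)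

theorem outcomeFrom_term {σ : StratProfile G} {h : Hist G} (hT : Terminal G a0 h) :
    outcomeFrom G a0 k I σ h = refpt G a0 h := by
  rw [outcomeFrom, playN, if_pos hT]

theorem outcomeFrom_step (hB : ∀ h, IsNode G a0 k I h → h.length ≤ bound G k)
    {σ : StratProfile G} (hσ : ValidProfile G a0 k I σ) {h : Hist G}
    (hn : IsNode G a0 k I h) (hT : ¬ Terminal G a0 h) :
    outcomeFrom G a0 k I σ h = outcomeFrom G a0 k I σ (h ++ [⟨I h, σ (I h) h⟩]) := by
  rw [outcomeFrom, playN, if_neg hT, outcomeFrom]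
  rw [playN_stable hB hσ _ _ (isNode_snoc.2 ⟨hn, hT, rfl, hσ h hn hT⟩) (by simp)]

theorem playN_congr {σ σ' : StratProfile G} (L : ℕ)
    (hh : ∀ (j : Fin n) (h : Hist G), L < h.length → σ j h = σ' j h) :
    ∀ (t : ℕ) (h : Hist G), L < h.length → playN G a0 I σ t h = playN G a0 I σ' t h := by
  intro t
  induction t with
  | zero => intro h _; rfl
  | succ t ih =>
    intro h hl
    rw [playN, playN, hh _ h hl]
    split_ifs
    · rfl
    · exact ih _ (by simp; omega)

/-- Backward induction values. -/
structure IsValue (G : Game n) (a0 : Profile G) (k : ℕ) (I : Hist G → Fin n)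
    (W : Hist G → Profile G) : Prop where
  term : ∀ h, IsNode G a0 k I h → Terminal G a0 h → W h = refpt G a0 h
  att : ∀ h, IsNode G a0 k I h → ¬ Terminal G a0 h →
    ∃ c : Option (G.A (I h)), availAct G a0 k h c ∧ W h = W (h ++ [⟨I h, c⟩])
  ub : ∀ h, IsNode G a0 k I h → ¬ Terminal G a0 h →
    ∀ c : Option (G.A (I h)), availAct G a0 k h c →
      G.u (I h) (W (h ++ [⟨I h, c⟩])) ≤ G.u (I h) (W h)

open Classical in
theorem spe_value (hS : StrictPrefs G)
    (hB : ∀ h, IsNode G a0 k I h → h.length ≤ bound G k)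
    {W : Hist G → Profile G} (hW : IsValue G a0 k I W)
    {σ : StratProfile G} (hσ : SPE G a0 k I σ) :
    ∀ (d : ℕ) (h : Hist G), IsNode G a0 k I h → bound G k < h.length + d →
      outcomeFrom G a0 k I σ h = W h := by
  intro d
  induction d with
  | zero => intro h hn hl; have := hB h hn; omega
  | succ d ih =>
    intro h hn hl
    by_cases hT : Terminal G a0 h
    · rw [outcomeFrom_term hT, hW.term h hn hT]
    have hch : ∀ c : Option (G.A (I h)), availAct G a0 k h c →
        outcomeFrom G a0 k I σ (h ++ [⟨I h, c⟩]) = W (h ++ [⟨I h, c⟩]) := fun c hc =>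
      ih _ (isNode_snoc.2 ⟨hn, hT, rfl, hc⟩) (by simp; omega)
    obtain ⟨c, hc, hWc⟩ := hW.att h hn hT
    apply hS (I h)
    apply le_antisymm
    · rw [outcomeFrom_step hB hσ.1 hn hT, hch _ (hσ.1 h hn hT)]
      exact hW.ub h hn hT _ (hσ.1 h hn hT)
    · rw [hWc, ← hch c hc]
      set τ : Strategy G (I h) := fun h' => if h' = h then c else σ (I h) h' with hτ
      have hv : ValidProfile G a0 k I (Function.update σ (I h) τ) := by
        intro h' hn' hT'
        have hold := hσ.1 h' hn' hT'
        by_cases e' : h' = h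
        · subst e'
          simpa [hτ] using hc
        · revert hold
          generalize I h' = j
          intro hold
          by_cases e : j = I h
          · subst e
            simpa [hτ, e'] using hold
          · simpa [e] using hold
      have hd := hσ.2 h hn hT τ hv
      rw [outcomeFrom_step hB hv hn hT] at hd
      have e1 : Function.update σ (I h) τ (I h) h = c := by simp [hτ]
      rw [e1] at hd
      have e2 : outcomeFrom G a0 k I (Function.update σ (I h) τ) (h ++ [⟨I h, c⟩])
          = outcomeFrom G a0 k I σ (h ++ [⟨I h, c⟩]) := by
        unfold outcomeFrom
        rw [playN_congr (σ' := σ) h.length _ _ _ (by simp)]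
        intro j h' hl'
        have e' : h' ≠ h := by rintro rfl; omega
        by_cases e : j = I h
        · subst e
          simp [hτ, e']
        · simp [e]
      rw [e2] at hd
      exact hd

open Classical in
theorem exists_spe (hB : ∀ h, IsNode G a0 k I h → h.length ≤ bound G k)
    {W : Hist G → Profile G} (hW : IsValue G a0 k I W) :
    ∃ σ : StratProfile G, SPE G a0 k I σ := by
  have hex : ∀ h, ∃ c : Option (G.A (I h)), IsNode G a0 k I h → ¬ Terminal G a0 h →
      availAct G a0 k h c ∧ W h = W (h ++ [⟨I h, c⟩]) := by
    intro h
    by_cases hn : IsNode G a0 k I h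
    · by_cases hT : Terminal G a0 h
      · exact ⟨none, fun _ h' => absurd hT h'⟩
      · obtain ⟨c, hc⟩ := hW.att h hn hT
        exact ⟨c, fun _ _ => hc⟩
    · exact ⟨none, fun h' => absurd h' hn⟩
  choose f hf using hex
  let σ : StratProfile G := fun j h => if e : I h = j then e ▸ f h else none
  have hσf : ∀ h, σ (I h) h = f h := by intro h; simp [σ]
  have hv : ValidProfile G a0 k I σ := by
    intro h hn hT
    rw [hσf]
    exact (hf h hn hT).1
  have hval : ∀ (d : ℕ) (h : Hist G), IsNode G a0 k I h → bound G k < h.length + d →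
      outcomeFrom G a0 k I σ h = W h := by
    intro d
    induction d with
    | zero => intro h hn hl; have := hB h hn; omega
    | succ d ih =>
      intro h hn hl
      by_cases hT : Terminal G a0 h
      · rw [outcomeFrom_term hT, hW.term h hn hT]
      · rw [outcomeFrom_step hB hv hn hT, hσf, (hf h hn hT).2]
        exact ih _ (isNode_snoc.2 ⟨hn, hT, rfl, (hf h hn hT).1⟩) (by simp; omega)
  refine ⟨σ, hv, ?_⟩
  intro h0 hn0 hT0 τ hvτ
  rw [hval (bound G k + 1) h0 hn0 (by omega)]
  generalize I h0 = i at τ hvτ ⊢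
  have key : ∀ (d : ℕ) (h : Hist G), IsNode G a0 k I h → bound G k < h.length + d →
      G.u i (outcomeFrom G a0 k I (Function.update σ i τ) h) ≤ G.u i (W h) := by
    intro d
    induction d with
    | zero => intro h hn hl; have := hB h hn; omega
    | succ d ih =>
      intro h hn hl
      by_cases hT : Terminal G a0 h
      · rw [outcomeFrom_term hT, hW.term h hn hT]
      · have ha := hvτ h hn hT
        rw [outcomeFrom_step hB hvτ hn hT]
        refine (ih _ (isNode_snoc.2 ⟨hn, hT, rfl, ha⟩) (by simp; omega)).trans ?_
        by_cases e : I h = i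
        · have := hW.ub h hn hT _ ha
          subst e
          exact this
        · rw [Function.update_of_ne e, hσf, ← (hf h hn hT).2]
  exact key (bound G k + 1) h0 hn0 (by omega)

end General
section Abstract

/-- Encoded profiles. -/
abbrev OO : Type := Fin 2 × Fin 2

def getO (o : OO) (i : Fin 2) : Fin 2 := if i = 0 then o.1 else o.2

def setO (o : OO) (i a : Fin 2) : OO := if i = 0 then (a, o.2) else (o.1, a)

/-- Encoded nodes. -/
structure XS where
  s : OO
  ref : OO
  prop : Option (Fin 2)
  used : List (OO × Fin 2 × Fin 2)
  p : Fin 2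
  lp : Bool

def x0 : XS := ⟨(0, 1), (0, 1), none, [], 0, false⟩

def stepX (x : XS) (c : Option (Fin 2)) : XS :=
  match c with
  | none => ⟨x.s, x.ref, x.prop, x.used, 1 - x.p, true⟩
  | some a =>
    if a = getO x.s x.p then
      ⟨x.s, x.s, some x.p, (x.s, x.p, a) :: x.used, 1 - x.p, false⟩
    else ⟨setO x.s x.p a, x.ref, x.prop, (x.s, x.p, a) :: x.used, 1 - x.p, false⟩

def termX (x : XS) (c : Option (Fin 2)) : Bool :=
  match c with
  | none => x.lp
  | some a => decide (a = getO x.s x.p ∧ x.ref = x.s ∧ x.prop = some (1 - x.p))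

def availX (x : XS) (c : Option (Fin 2)) : Bool :=
  match c with
  | none => true
  | some a => decide ((x.s, x.p, a) ∉ x.used)

def UU (p : Fin 2) (o : OO) : ℕ :=
  if o.1 = 0 then
    (if o.2 = 0 then (if p = 0 then 4 else 3) else (if p = 0 then 1 else 4))
  else
    (if o.2 = 0 then (if p = 0 then 2 else 1) else (if p = 0 then 3 else 2))

/-- Evaluate `v` before continuing. -/
def force (v : OO) (f : OO → OO) : OO :=
  if v = (0, 0) then f (0, 0) else if v = (0, 1) then f (0, 1)
  else if v = (1, 0) then f (1, 0) else f (1, 1)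

def pick (p : Fin 2) (f : Option (Fin 2) → OO) : List (Option (Fin 2)) → Option OO → OO
  | [], none => (0, 0)
  | [], some b => b
  | c :: cs, none => force (f c) (fun v => pick p f cs (some v))
  | c :: cs, some b =>
    if UU p b = 4 then b
    else force (f c) (fun v =>
      if UU p b < UU p v then pick p f cs (some v) else pick p f cs (some b))

def choices (x : XS) : List (Option (Fin 2)) :=
  if x.lp then [none, some (getO x.s x.p), some (1 - getO x.s x.p)]
  else [some (getO x.s x.p), some (1 - getO x.s x.p), none]

def ev : ℕ → XS → OO
  | 0, x => x.ref
  | f + 1, x =>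
    pick x.p (fun c => if termX x c then (stepX x c).ref else ev f (stepX x c))
        ((choices x).filter (availX x)) none

theorem ev_root : ev 60 x0 = (1, 1) := by decide +kernel

end Abstract
section Rep

theorem force_eq (v : OO) (f : OO → OO) : force v f = f v := by
  rcases v with ⟨a, b⟩
  fin_cases a <;> fin_cases b <;> rfl

theorem UU_le (p : Fin 2) (o : OO) : UU p o ≤ 4 := by
  unfold UU; split_ifs <;> omega

theorem pick_some (p : Fin 2) (f : Option (Fin 2) → OO) (l : List (Option (Fin 2))) :
    ∀ b, (pick p f l (some b) = b ∨ ∃ c ∈ l, pick p f l (some b) = f c) ∧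
      UU p b ≤ UU p (pick p f l (some b)) ∧
      ∀ c ∈ l, UU p (f c) ≤ UU p (pick p f l (some b)) := by
  induction l with
  | nil => intro b; simp [pick]
  | cons c cs ih =>
    intro b
    rw [pick]
    split_ifs with h4
    · refine ⟨Or.inl rfl, le_rfl, fun c _ => ?_⟩
      rw [h4]; exact UU_le _ _
    · rw [force_eq]
      split_ifs with hlt
      · obtain ⟨h1, h2, h3⟩ := ih (f c)
        refine ⟨Or.inr ?_, by omega, ?_⟩
        · rcases h1 with h1 | ⟨d, hd, h1⟩
          · exact ⟨c, by simp, h1⟩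
          · exact ⟨d, by simp [hd], h1⟩
        · intro d hd
          rcases List.mem_cons.1 hd with rfl | hd
          · exact h2
          · exact h3 d hd
      · obtain ⟨h1, h2, h3⟩ := ih b
        refine ⟨?_, h2, ?_⟩
        · rcases h1 with h1 | ⟨d, hd, h1⟩
          · exact Or.inl h1
          · exact Or.inr ⟨d, by simp [hd], h1⟩
        · intro d hd
          rcases List.mem_cons.1 hd with rfl | hd
          · omega
          · exact h3 d hd

theorem pick_none (p : Fin 2) (f : Option (Fin 2) → OO) (l : List (Option (Fin 2)))
    (hl : l ≠ []) :
    (∃ c ∈ l, pick p f l none = f c) ∧ ∀ c ∈ l, UU p (f c) ≤ UU p (pick p f l none) := by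
  cases l with
  | nil => exact absurd rfl hl
  | cons c cs =>
    rw [pick, force_eq]
    obtain ⟨h1, h2, h3⟩ := pick_some p f cs (f c)
    constructor
    · rcases h1 with h1 | ⟨d, hd, h1⟩
      · exact ⟨c, by simp, h1⟩
      · exact ⟨d, by simp [hd], h1⟩
    · intro d hd
      rcases List.mem_cons.1 hd with rfl | hd
      · exact h2
      · exact h3 d hd

theorem mem_choices (x : XS) (c : Option (Fin 2)) : c ∈ choices x := by
  unfold choices
  generalize getO x.s x.p = a
  have : ∀ (a : Fin 2) (c : Option (Fin 2)), c = none ∨ c = some a ∨ c = some (1 - a) := by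
    decide
  have := this a c
  split_ifs <;> simp <;> tauto

/-- Value of a choice. -/
def cvX (f : ℕ) (x : XS) (c : Option (Fin 2)) : OO :=
  if termX x c then (stepX x c).ref else ev f (stepX x c)

theorem ev_spec (f : ℕ) (x : XS) :
    (∃ c, availX x c = true ∧ ev (f + 1) x = cvX f x c) ∧
    ∀ c, availX x c = true → UU x.p (cvX f x c) ≤ UU x.p (ev (f + 1) x) := by
  have hne : ((choices x).filter (availX x)) ≠ [] := by
    apply List.ne_nil_of_mem (a := none)
    rw [List.mem_filter]
    exact ⟨mem_choices x none, rfl⟩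
  obtain ⟨⟨c, hc, h1⟩, h2⟩ := pick_none x.p (cvX f x) _ hne
  refine ⟨⟨c, (List.mem_filter.1 hc).2, h1⟩, fun d hd => ?_⟩
  exact h2 d (List.mem_filter.2 ⟨mem_choices x d, hd⟩)

def toP (o : OO) : Profile g13 := fun i => getO o i

theorem toP_inj {o o' : OO} (h : toP o = toP o') : o = o' := by
  have h0 : getO o 0 = getO o' 0 := congrFun h 0
  have h1 : getO o 1 = getO o' 1 := congrFun h 1
  exact Prod.ext h0 h1

theorem toP_set (o : OO) (i a : Fin 2) :
    toP (setO o i a) = Function.update (toP o) i (show g13.A i from a) := by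
  funext j
  have : ∀ (i j : Fin 2), i = 0 ∧ j = 0 ∨ i = 0 ∧ j = 1 ∨ i = 1 ∧ j = 0 ∨ i = 1 ∧ j = 1 := by
    decide
  rcases this i j with ⟨rfl, rfl⟩ | ⟨rfl, rfl⟩ | ⟨rfl, rfl⟩ | ⟨rfl, rfl⟩
  · rw [Function.update_self]; rfl
  · rw [Function.update_of_ne (by decide)]; rfl
  · rw [Function.update_of_ne (by decide)]; rfl
  · rw [Function.update_self]; rfl

theorem u_toP (p : Fin 2) (o : OO) : g13.u p (toP o) = (UU p o : ℝ) := by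
  rcases o with ⟨a, b⟩
  fin_cases p <;> fin_cases a <;> fin_cases b <;> simp [g13, toP, getO, UU]

theorem toP_surj (s : Profile g13) : ∃ o, toP o = s := by
  refine ⟨(s 0, s 1), ?_⟩
  funext i
  have : ∀ (i : Fin 2), i = 0 ∨ i = 1 := by decide
  rcases this i with rfl | rfl <;> rfl

theorem strict13 : StrictPrefs g13 := by
  intro p s s' h
  obtain ⟨o, rfl⟩ := toP_surj s
  obtain ⟨o', rfl⟩ := toP_surj s'
  rw [u_toP, u_toP] at h
  have h' : UU p o = UU p o' := by exact_mod_cast h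
  have : ∀ (p : Fin 2) (o o' : OO), UU p o = UU p o' → o = o' := by decide
  rw [this p o o' h']

/-- Move of a player. -/
def mv (p : Fin 2) (c : Option (Fin 2)) : Move g13 := ⟨p, c⟩

theorem fold3_snoc {n : ℕ} (G : Game n) (a0 : Profile G) (h : Hist G) (m : Move G) :
    fold3 G a0 (h ++ [m]) = stepFold G (fold3 G a0 h) m := by
  simp [fold3]

structure Rep (h : Hist g13) (x : XS) : Prop where
  fold : fold3 g13 lr13 h = (toP x.s, toP x.ref, x.prop)
  pl : altI13 h = x.p
  used : ∀ s i a, (∃ t, h[t]? = some (mv i (some a)) ∧ state g13 lr13 (h.take t) = toP s) ↔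
    (s, i, a) ∈ x.used
  lp : x.lp = true ↔ ∃ h', h = h' ++ [mv (1 - x.p) none]
  nodup : x.used.Nodup
  len : h.length ≤ 2 * x.used.length + (if x.lp then 1 else 0)

theorem rep_nil : Rep [] x0 := by
  refine ⟨?_, rfl, ?_, ?_, ?_, ?_⟩
  · have : lr13 = toP (0, 1) := rfl
    simp [fold3, x0, this]
  · intro s i a; simp [x0]
  · simp [x0]
  · simp [x0]
  · simp [x0]

theorem Rep.state {h : Hist g13} {x : XS} (r : Rep h x) : state g13 lr13 h = toP x.s := by
  rw [NoHarm.state, r.fold]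

theorem Rep.refpt {h : Hist g13} {x : XS} (r : Rep h x) : refpt g13 lr13 h = toP x.ref := by
  rw [NoHarm.refpt, r.fold]

theorem Rep.proposer {h : Hist g13} {x : XS} (r : Rep h x) :
    proposer g13 lr13 h = x.prop := by
  rw [NoHarm.proposer, r.fold]

theorem Rep.avail {h : Hist g13} {x : XS} (r : Rep h x) (c : Option (Fin 2)) :
    availAct g13 lr13 1 h (i := x.p) c ↔ availX x c = true := by
  cases c with
  | none => simp [availAct, availX]
  | some a =>
    have h1 := r.used x.s x.p a
    have h2 : availAct g13 lr13 1 h (i := x.p) (some a) ↔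
        countAct g13 lr13 h (mv x.p (some a)) < 1 :=
      ⟨fun H => H a rfl, fun H b hb => by cases hb; exact H⟩
    refine h2.trans ?_
    simp only [availX, decide_eq_true_eq]
    rw [← h1, countAct, Nat.lt_one_iff, Finset.card_eq_zero, Finset.filter_eq_empty_iff, r.state]
    constructor
    · rintro H ⟨t, ht, hs⟩
      have : t < h.length := by
        by_contra hc
        rw [List.getElem?_eq_none (by omega)] at ht
        cases ht
      exact H (Finset.mem_range.2 this) ⟨ht, hs⟩
    · intro H t _ hh
      exact H ⟨t, hh⟩

theorem one_sub_ne (p i : Fin 2) : i ≠ p ↔ i = 1 - p := by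
  revert p i; decide

theorem Rep.term {h : Hist g13} {x : XS} (r : Rep h x) (c : Option (Fin 2)) :
    Terminal g13 lr13 (h ++ [mv x.p c]) ↔ termX x c = true := by
  have hS : TerminalStay g13 lr13 (h ++ [mv x.p c]) ↔
      c = some (getO x.s x.p) ∧ x.ref = x.s ∧ x.prop = some (1 - x.p) := by
    constructor
    · rintro ⟨h', m, i, e, hs, hr, hp, hi⟩
      obtain ⟨rfl, e2⟩ := List.append_inj' e rfl
      obtain rfl : mv x.p c = m := by simpa using e2
      rw [IsStay, r.state] at hs
      rw [r.refpt, r.state] at hr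
      rw [r.proposer] at hp
      refine ⟨hs, toP_inj hr, ?_⟩
      rw [hp, (one_sub_ne x.p i).1 hi]
    · rintro ⟨h1, h2, h3⟩
      refine ⟨h, mv x.p c, 1 - x.p, rfl, ?_, ?_, ?_, ?_⟩
      · rw [IsStay, r.state]; exact h1
      · rw [r.refpt, r.state, h2]
      · rw [r.proposer, h3]
      · exact (one_sub_ne _ _).2 rfl
  have hP : TerminalPass g13 (h ++ [mv x.p c]) ↔ c = none ∧ x.lp = true := by
    rw [r.lp]
    constructor
    · rintro ⟨hl, hn, hi⟩
      rcases List.eq_nil_or_concat h with rfl | ⟨h', m, rfl⟩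
      · simp at hl
      have e : (h' ++ [m] ++ [mv x.p c]).drop ((h' ++ [m] ++ [mv x.p c]).length - 2)
          = [m, mv x.p c] := by
        simp
      rw [List.concat_eq_append] at *
      rw [e] at hn hi
      have hc : c = none := hn (mv x.p c) (by simp)
      have hm : m.2 = none := hn m (by simp)
      refine ⟨hc, h', ?_⟩
      obtain ⟨m', hm', hm1⟩ := hi (1 - x.p)
      have hne : (1 - x.p) ≠ x.p := (one_sub_ne _ _).2 rfl
      rcases List.mem_cons.1 hm' with rfl | hm'
      · rcases m' with ⟨j, d⟩
        simp only at hm1 hm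
        subst hm1
        subst hm
        rfl
      · obtain rfl : m' = mv x.p c := by simpa using hm'
        exact absurd hm1.symm hne
    · rintro ⟨rfl, h', rfl⟩
      have e : (h' ++ [mv (1 - x.p) none] ++ [mv x.p none]).drop
          ((h' ++ [mv (1 - x.p) none] ++ [mv x.p none]).length - 2)
          = [mv (1 - x.p) none, mv x.p none] := by
        simp
      refine ⟨by simp, ?_, ?_⟩
      · rw [e]
        intro m hm
        simp only [List.mem_cons, List.not_mem_nil, or_false] at hm
        rcases hm with rfl | rfl <;> rfl
      · rw [e]
        intro i
        by_cases hi : i = x.p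
        · exact ⟨mv x.p none, by simp, hi.symm⟩
        · exact ⟨mv (1 - x.p) none, by simp, ((one_sub_ne _ _).1 hi).symm⟩
  rw [Terminal, hS, hP]
  cases c with
  | none => simp [termX]
  | some a => simp [termX]

theorem alt_snoc (h : Hist g13) (m : Move g13) : altI13 (h ++ [m]) = 1 - altI13 h := by
  have h1 : (h ++ [m]).length = h.length + 1 := by simp
  unfold altI13
  simp only [h1]
  rcases Nat.mod_two_eq_zero_or_one h.length with e | e
  · have e' : (h.length + 1) % 2 = 1 := by omega
    simp only [e, e']; rfl
  · have e' : (h.length + 1) % 2 = 0 := by omega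
    simp only [e, e']; rfl

theorem snoc_used {h : Hist g13} {m : Move g13} {s : OO} {i a : Fin 2} :
    (∃ t, (h ++ [m])[t]? = some (mv i (some a)) ∧
      state g13 lr13 ((h ++ [m]).take t) = toP s) ↔
    (∃ t, h[t]? = some (mv i (some a)) ∧ state g13 lr13 (h.take t) = toP s) ∨
      (m = mv i (some a) ∧ state g13 lr13 h = toP s) := by
  constructor
  · rintro ⟨t, ht, hs⟩
    rcases lt_trichotomy t h.length with h1 | h1 | h1
    · rw [List.getElem?_append_left h1] at ht
      rw [List.take_append_of_le_length h1.le] at hs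
      exact Or.inl ⟨t, ht, hs⟩
    · subst h1
      right
      simpa using And.intro ht hs
    · rw [List.getElem?_eq_none (by simp; omega)] at ht
      cases ht
  · rintro (⟨t, ht, hs⟩ | ⟨rfl, hs⟩)
    · have h1 : t < h.length := by
        by_contra hc
        rw [List.getElem?_eq_none (by omega)] at ht
        cases ht
      refine ⟨t, ?_, ?_⟩
      · rw [List.getElem?_append_left h1]; exact ht
      · rw [List.take_append_of_le_length h1.le]; exact hs
    · exact ⟨h.length, by simp, by simpa using hs⟩

theorem mv_inj {i j : Fin 2} {c d : Option (Fin 2)} : mv i c = mv j d ↔ i = j ∧ c = d := by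
  constructor
  · intro h
    obtain ⟨h1, h2⟩ := Sigma.mk.inj h
    exact ⟨h1, eq_of_heq h2⟩
  · rintro ⟨rfl, rfl⟩; rfl

theorem Rep.step {h : Hist g13} {x : XS} (r : Rep h x) (c : Option (Fin 2))
    (ha : availX x c = true) (hT : termX x c = false) :
    Rep (h ++ [mv x.p c]) (stepX x c) := by
  have hp : altI13 (h ++ [mv x.p c]) = 1 - x.p := by rw [alt_snoc, r.pl]
  have hpp : ∀ p : Fin 2, 1 - (1 - p) = p := by decide
  cases c with
  | none =>
    have hlp : x.lp = false := hT
    refine ⟨?_, hp, ?_, ?_, r.nodup, ?_⟩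
    · rw [fold3_snoc, r.fold]; rfl
    · intro s i a
      rw [snoc_used, r.used, mv_inj]
      simp [stepX]
    · simp only [stepX, true_iff, hpp]
      exact ⟨h, rfl⟩
    · have := r.len
      simp [hlp, stepX] at this ⊢
      omega
  | some a =>
    have hnu : (x.s, x.p, a) ∉ x.used := by simpa [availX] using ha
    have hus : ∀ s i b, (∃ t, (h ++ [mv x.p (some a)])[t]? = some (mv i (some b)) ∧
        NoHarm.state g13 lr13 ((h ++ [mv x.p (some a)]).take t) = toP s) ↔
        (s, i, b) ∈ (x.s, x.p, a) :: x.used := by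
      intro s i b
      rw [snoc_used, r.used, mv_inj, r.state, List.mem_cons]
      constructor
      · rintro (h1 | ⟨⟨rfl, h2⟩, h3⟩)
        · exact Or.inr h1
        · left
          rw [toP_inj h3, Option.some.inj h2]
      · rintro (h1 | h1)
        · right
          simp only [Prod.mk.injEq] at h1
          obtain ⟨rfl, rfl, rfl⟩ := h1
          exact ⟨⟨rfl, rfl⟩, rfl⟩
        · exact Or.inl h1
    have hlast : ∀ q : Fin 2, ¬ ∃ h', h ++ [mv x.p (some a)] = h' ++ [mv q none] := by
      rintro q ⟨h', e⟩
      have e2 := (List.append_inj' e rfl).2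
      have e3 : mv x.p (some a) = mv q none := by simpa using e2
      exact absurd (mv_inj.1 e3).2 (by simp)
    have hnd : ((x.s, x.p, a) :: x.used).Nodup := List.nodup_cons.2 ⟨hnu, r.nodup⟩
    have hln : (h ++ [mv x.p (some a)]).length ≤ 2 * ((x.s, x.p, a) :: x.used).length := by
      have := r.len
      simp only [List.length_append, List.length_cons, List.length_nil]
      split_ifs at this <;> omega
    have hf : fold3 g13 lr13 (h ++ [mv x.p (some a)]) =
        if a = getO x.s x.p then (toP x.s, toP x.s, some x.p)
        else (toP (setO x.s x.p a), toP x.ref, x.prop) := by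
      rw [fold3_snoc, r.fold, toP_set]
      rfl
    by_cases e : a = getO x.s x.p
    · rw [if_pos e] at hf
      simp only [stepX, if_pos e]
      exact ⟨hf, hp, hus, ⟨fun hh => absurd hh (by simp), fun hh => absurd hh (hlast _)⟩, hnd, by simpa using hln⟩
    · rw [if_neg e] at hf
      simp only [stepX, if_neg e]
      exact ⟨hf, hp, hus, ⟨fun hh => absurd hh (by simp), fun hh => absurd hh (hlast _)⟩, hnd, by simpa using hln⟩

/-- Reference point after any choice. -/
theorem Rep.ref_step {h : Hist g13} {x : XS} (r : Rep h x) (c : Option (Fin 2)) :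
    NoHarm.refpt g13 lr13 (h ++ [mv x.p c]) = toP (stepX x c).ref := by
  rw [NoHarm.refpt, fold3_snoc, r.fold]
  cases c with
  | none => rfl
  | some a =>
    by_cases e : a = getO x.s x.p
    · have : stepFold g13 (toP x.s, toP x.ref, x.prop) (mv x.p (some a)) =
        (toP x.s, toP x.s, some x.p) := if_pos e
      rw [this]; simp [stepX, e]
    · have : stepFold g13 (toP x.s, toP x.ref, x.prop) (mv x.p (some a)) =
        (Function.update (toP x.s) x.p a, toP x.ref, x.prop) := if_neg e
      rw [this]; simp [stepX, e]

def XX (h : Hist g13) : XS := h.foldl (fun x m => stepX x m.2) x0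

theorem XX_snoc (h : Hist g13) (p : Fin 2) (c : Option (Fin 2)) :
    XX (h ++ [mv p c]) = stepX (XX h) c := by
  simp [XX, mv]

theorem rep_node (h : Hist g13) :
    IsNode g13 lr13 1 altI13 h → ¬ Terminal g13 lr13 h → Rep h (XX h) := by
  induction h using List.reverseRecOn with
  | nil => intro _ _; exact rep_nil
  | append_singleton h m ih =>
    intro hn hT
    obtain ⟨h1, h2, h3, h4⟩ := isNode_snoc.1 hn
    have r := ih h1 h2
    rw [r.pl] at h3
    obtain ⟨c, rfl⟩ : ∃ c, m = mv (XX h).p c := by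
      rcases m with ⟨j, c⟩
      simp only at h3
      subst h3
      exact ⟨c, rfl⟩
    rw [XX_snoc]
    refine r.step c ((r.avail c).1 h4) ?_
    rw [r.term] at hT
    simpa using hT

theorem len_nonterm {h : Hist g13} (hn : IsNode g13 lr13 1 altI13 h)
    (hT : ¬ Terminal g13 lr13 h) : h.length ≤ 33 := by
  have r := rep_node h hn hT
  have h1 := r.len
  have h2 : (XX h).used.length ≤ 16 := by
    have := r.nodup.length_le_card
    simpa using this
  split_ifs at h1 <;> omega

theorem len_node (h : Hist g13) (hn : IsNode g13 lr13 1 altI13 h) : h.length ≤ 34 := by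
  rcases List.eq_nil_or_concat h with rfl | ⟨h', m, rfl⟩
  · simp
  · rw [List.concat_eq_append] at hn ⊢
    obtain ⟨h1, h2, -, -⟩ := isNode_snoc.1 hn
    have := len_nonterm h1 h2
    simp; omega

theorem len_bound (h : Hist g13) (hn : IsNode g13 lr13 1 altI13 h) :
    h.length ≤ bound g13 1 := by
  refine (len_node h hn).trans ?_
  unfold bound
  have h1 : 3 * 2 * 2 ≤ (1 + 2) * (Fintype.card (Profile g13) + 2) *
      ((∑ i, Fintype.card (g13.A i)) + 2) := by gcongr <;> omega
  omega

open Classical in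
noncomputable def WW (h : Hist g13) : Profile g13 :=
  if Terminal g13 lr13 h then refpt g13 lr13 h else toP (ev (60 - h.length) (XX h))

theorem WW_child {h : Hist g13} (hn : IsNode g13 lr13 1 altI13 h)
    (hT : ¬ Terminal g13 lr13 h) (c : Option (Fin 2)) :
    WW (h ++ [mv (XX h).p c]) = toP (cvX (59 - h.length) (XX h) c) := by
  have r := rep_node h hn hT
  unfold WW cvX
  by_cases e : termX (XX h) c = true
  · rw [if_pos ((r.term c).2 e), if_pos e, r.ref_step]
  · rw [if_neg (fun h => e ((r.term c).1 h)), if_neg e, XX_snoc]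
    have : 60 - (h ++ [mv (XX h).p c]).length = 59 - h.length := by
      rw [List.length_append, List.length_singleton]; omega
    rw [this]

theorem isValue13 : IsValue g13 lr13 1 altI13 WW := by
  have main : ∀ h, IsNode g13 lr13 1 altI13 h → ¬ Terminal g13 lr13 h → ∀ i, altI13 h = i →
      (∃ c : Option (g13.A i), availAct g13 lr13 1 h c ∧ WW h = WW (h ++ [⟨i, c⟩])) ∧
      ∀ c : Option (g13.A i), availAct g13 lr13 1 h c →
      g13.u i (WW (h ++ [⟨i, c⟩])) ≤ g13.u i (WW h) := by
    intro h hn hT i hi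
    have r := rep_node h hn hT
    obtain rfl : (XX h).p = i := r.pl.symm.trans hi
    have hl := len_nonterm hn hT
    have hw : WW h = toP (ev (59 - h.length + 1) (XX h)) := by
      rw [WW, if_neg hT]
      congr 2
      omega
    obtain ⟨⟨c, hc, h1⟩, h2⟩ := ev_spec (59 - h.length) (XX h)
    constructor
    · refine ⟨c, (r.avail c).2 hc, ?_⟩
      rw [hw, h1]
      exact (WW_child hn hT c).symm
    · intro d hd
      have h3 := h2 d ((r.avail d).1 hd)
      have h4 : WW (h ++ [⟨(XX h).p, d⟩]) = _ := WW_child hn hT d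
      rw [h4, hw, u_toP, u_toP]
      exact_mod_cast h3
  refine ⟨fun h _ hT => if_pos hT, fun h hn hT => (main h hn hT _ rfl).1,
    fun h hn hT => (main h hn hT _ rfl).2⟩

theorem nil_nonterm : ¬ Terminal g13 lr13 [] := by
  rintro (⟨h', m, i, e, -⟩ | ⟨h, -⟩)
  · simp at e
  · simp at h

theorem WW_nil : WW [] = rr13 := by
  rw [WW, if_neg nil_nonterm]
  have : ev (60 - ([] : Hist g13).length) (XX []) = (1, 1) := ev_root
  rw [this]
  funext i
  have : ∀ (i : Fin 2), i = 0 ∨ i = 1 := by decide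
  rcases this i with rfl | rfl <;> rfl

end Rep

/-- In the game above with initial reference point `(L,R)`,
`k = 1`, and the strictly alternating player function with Row first, the
(unconstrained) subgame perfect equilibrium outcome of `Γ` is `(R,R)`, which is
Pareto dominated by `(L,L)`: without the NHP the equilibrium outcome need not
be Pareto optimal. -/
theorem spe_outcome_not_pareto_optimal :
    (∃ σ : StratProfile g13, SPE g13 lr13 1 altI13 σ) ∧
    (∀ σ : StratProfile g13, SPE g13 lr13 1 altI13 σ →
      outcome g13 lr13 1 altI13 σ = rr13) ∧
    ParetoDom g13 ll13 rr13 := by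
  refine ⟨exists_spe len_bound isValue13, ?_, ?_⟩
  · intro σ hσ
    rw [outcome, spe_value strict13 len_bound isValue13 hσ (bound g13 1 + 1) [] isNode_nil
      (by simp), WW_nil]
  · have hl : ll13 = toP (0, 0) := by
      funext i
      have : ∀ (i : Fin 2), i = 0 ∨ i = 1 := by decide
      rcases this i with rfl | rfl <;> rfl
    have hr : rr13 = toP (1, 1) := by
      funext i
      have : ∀ (i : Fin 2), i = 0 ∨ i = 1 := by decide
      rcases this i with rfl | rfl <;> rfl
    rw [hl, hr]
    constructor
    · intro i
      rw [u_toP, u_toP]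
      have : ∀ i : Fin 2, UU i (1, 1) ≤ UU i (0, 0) := by decide
      exact_mod_cast this i
    · refine ⟨0, ?_⟩
      rw [u_toP, u_toP]
      have : UU 0 (1, 1) < UU 0 (0, 0) := by decide
      exact_mod_cast this

end NoHarm
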